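/- arXiv:2410.00530 — 2 statements merged into one kernel-verified Lean document; each statement's English description precedes it below -/
import Mathlib

section
/- Let X be a metric space and ℓ : X → [0,∞) lsc with inf_X ℓ = 0. Suppose there exists a sequence (x̄_n) with ∑ ℓ(x̄_n) d(x̄_n, x̄_{n+1}) < ∞ and ℓ(x̄_n) → 0. Define u₀(x) = inf { ∑_{n=0}^∞ ℓ(x_n) d(x_n, x_{n+1}) : x₀ = x, ℓ(x_n) → 0 }. Then u₀ is a solution of the global Eikonal equation: u₀ is lsc, inf_X u₀ = 0, and G[u₀](x) = ℓ(x) for all x ∈ X. -/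
open Filter Topology ENNReal

/-- The global slope of a nonnegative extended-real valued function `u : X → [0, ∞]`:
`G[u](x) = sup_{y ≠ x} (u x - u y)⁺ / d(x,y)` when `u x < ∞` (truncated subtraction in
`ℝ≥0∞` is exactly the positive part), and `∞` when `u x = ∞`. -/
noncomputable def gslopeN {X : Type*} [MetricSpace X] (u : X → ℝ≥0∞) (x : X) : ℝ≥0∞ :=
  if u x = ⊤ then ⊤
  else ⨆ (y : X) (_ : y ≠ x), (u x - u y) / edist x y

/-- The operator `T u (x) = inf_y (u y + ℓ x · d(x,y)) / (1 + λ · d(x,y))` acting on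
nonnegative extended-real valued functions. -/
noncomputable def TopE {X : Type*} [MetricSpace X] (lam : ℝ) (ℓ : X → ℝ)
    (u : X → ℝ≥0∞) (x : X) : ℝ≥0∞ :=
  ⨅ y : X, (u y + ENNReal.ofReal (ℓ x) * edist x y) / (1 + ENNReal.ofReal lam * edist x y)

/-- Under hypothesis (H₀), the function
`u₀(x) = inf { ∑ ℓ(x_n) d(x_n, x_{n+1}) : x₀ = x, ℓ(x_n) → 0 }` is a solution of the
global Eikonal equation: `u₀` is lsc, real-valued, `inf u₀ = 0`, and `G[u₀] = ℓ`. -/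
theorem series_formula_solution {X : Type*} [MetricSpace X] [Nonempty X]
    (ℓ : X → ℝ) (hℓ : LowerSemicontinuous ℓ)
    (hℓ0 : ∀ x, 0 ≤ ℓ x) (hinfℓ : ⨅ x, ℓ x = 0)
    (H0 : ∃ σ : ℕ → X, Tendsto (fun n => ℓ (σ n)) atTop (𝓝 0) ∧
      ∑' n, ENNReal.ofReal (ℓ (σ n)) * edist (σ n) (σ (n + 1)) < ⊤) :
    let u₀ : X → ℝ≥0∞ := fun x =>
      ⨅ (σ : ℕ → X) (_ : σ 0 = x ∧ Tendsto (fun n => ℓ (σ n)) atTop (𝓝 0)),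
        ∑' n, ENNReal.ofReal (ℓ (σ n)) * edist (σ n) (σ (n + 1))
    LowerSemicontinuous u₀ ∧ (∀ x, u₀ x ≠ ⊤) ∧ (⨅ x, u₀ x = 0) ∧
      ∀ x, gslopeN u₀ x = ENNReal.ofReal (ℓ x) := by
  intro u₀
  have hL : ∀ σ : ℕ → X, Tendsto (fun n => ℓ (σ n)) atTop (𝓝 0) →
      Tendsto (fun n => ENNReal.ofReal (ℓ (σ n))) atTop (𝓝 0) := by
    intro σ h
    have := ENNReal.tendsto_ofReal h
    simpa using this
  have hle : ∀ σ : ℕ → X, Tendsto (fun n => ℓ (σ n)) atTop (𝓝 0) →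
      u₀ (σ 0) ≤ ∑' n, ENNReal.ofReal (ℓ (σ n)) * edist (σ n) (σ (n + 1)) := by
    intro σ h
    exact iInf₂_le σ ⟨rfl, h⟩
  have hA : ∀ x y, u₀ x ≤ ENNReal.ofReal (ℓ x) * edist x y + u₀ y := by
    intro x y
    have : ENNReal.ofReal (ℓ x) * edist x y + u₀ y =
      ⨅ (σ : ℕ → X) (_ : σ 0 = y ∧ Tendsto (fun n => ℓ (σ n)) atTop (𝓝 0)),
        (ENNReal.ofReal (ℓ x) * edist x y +
          ∑' n, ENNReal.ofReal (ℓ (σ n)) * edist (σ n) (σ (n + 1))) := by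
      simp only [u₀, ENNReal.add_iInf]
    rw [this]
    refine le_iInf₂ fun σ hσ => ?_
    let τ : ℕ → X := fun n => Nat.casesOn n x σ
    have hτ : Tendsto (fun n => ℓ (τ n)) atTop (𝓝 0) :=
      (tendsto_add_atTop_iff_nat 1).1 hσ.2
    have h1 := hle τ hτ
    rw [tsum_eq_zero_add' ENNReal.summable] at h1
    have e : τ (0 + 1) = y := hσ.1
    rw [e] at h1
    exact h1
  have hB : ∀ σ : ℕ → X, Tendsto (fun n => ℓ (σ n)) atTop (𝓝 0) → ∀ N,
      u₀ (σ N) ≤ ∑' n, ENNReal.ofReal (ℓ (σ (n + N))) * edist (σ (n + N)) (σ (n + N + 1)) := by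
    intro σ h N
    have h1 := hle (fun n => σ (n + N)) ((tendsto_add_atTop_iff_nat N).2 h)
    simp only [zero_add] at h1
    refine h1.trans (le_of_eq (tsum_congr fun n => ?_))
    rw [add_right_comm]
  have hfin : ∀ x, u₀ x ≠ ⊤ := by
    obtain ⟨σ, h1, h2⟩ := H0
    intro x
    refine ne_top_of_le_ne_top ?_ (hA x (σ 0))
    exact ENNReal.add_ne_top.2 ⟨ENNReal.mul_ne_top ENNReal.ofReal_ne_top (edist_ne_top _ _),
      ((hle σ h1).trans_lt h2).ne⟩
  refine ⟨?_, hfin, ?_, ?_⟩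
  · intro x y hy
    have hc : Tendsto (fun z => ENNReal.ofReal (ℓ x) * edist x z + y) (𝓝 x) (𝓝 y) := by
      have h1 : Tendsto (fun z => edist x z) (𝓝 x) (𝓝 0) := by
        have : Continuous (fun z => edist x z) := by fun_prop
        simpa using this.tendsto x
      have h2 := (ENNReal.Tendsto.const_mul (a := ENNReal.ofReal (ℓ x)) h1
        (Or.inr ENNReal.ofReal_ne_top)).add_const y
      simpa using h2
    filter_upwards [hc.eventually (gt_mem_nhds hy)] with z hz
    exact lt_of_add_lt_add_left (hz.trans_le (hA x z))
  · obtain ⟨σ, h1, h2⟩ := H0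
    have h3 := ENNReal.tendsto_sum_nat_add
      (fun n => ENNReal.ofReal (ℓ (σ n)) * edist (σ n) (σ (n + 1))) h2.ne
    refine le_antisymm (ge_of_tendsto' h3 fun N => ?_) bot_le
    exact (iInf_le _ (σ N)).trans (hB σ h1 N)
  · intro x
    rw [gslopeN, if_neg (hfin x)]
    apply le_antisymm
    · refine iSup₂_le fun y hy => ?_
      refine ENNReal.div_le_of_le_mul ?_
      exact tsub_le_iff_right.2 (hA x y)
    · refine le_of_forall_lt_imp_le_of_dense fun c1 hc1 => ?_
      obtain ⟨c', hcc, hc'⟩ := exists_between hc1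
      have hlsc : ∀ᶠ y in 𝓝 x, c' < ENNReal.ofReal (ℓ y) := by
        have h1 : c'.toReal < ℓ x := (ENNReal.lt_ofReal_iff_toReal_lt hc'.ne_top).1 hc'
        filter_upwards [hℓ x _ h1] with y hy
        exact (ENNReal.lt_ofReal_iff_toReal_lt hc'.ne_top).2 hy
      obtain ⟨r, hr, hball⟩ := Metric.mem_nhds_iff.1 hlsc
      have hδ : (c' - c1) * ENNReal.ofReal r ≠ 0 :=
        mul_ne_zero (tsub_pos_of_lt hcc).ne' (ENNReal.ofReal_pos.2 hr).ne'
      have hlt : u₀ x < u₀ x + (c' - c1) * ENNReal.ofReal r :=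
        ENNReal.lt_add_right (hfin x) hδ
      obtain ⟨σ, hσ⟩ := iInf_lt_iff.1 hlt
      obtain ⟨⟨h0, hσt⟩, hsum⟩ := iInf_lt_iff.1 hσ
      have hex : ∃ n, σ n ∉ Metric.ball x r := by
        have hpos : (0 : ℝ≥0∞) < c' := bot_le.trans_lt hcc
        obtain ⟨n, hn⟩ := ((hL σ hσt).eventually (gt_mem_nhds hpos)).exists
        exact ⟨n, fun h => lt_asymm hn (hball h)⟩
      classical
      obtain ⟨N, hN, hmin⟩ : ∃ N, σ N ∉ Metric.ball x r ∧ ∀ n < N, σ n ∈ Metric.ball x r :=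
        ⟨Nat.find hex, Nat.find_spec hex, fun n hn => not_not.1 (Nat.find_min hex hn)⟩
      have hrD : ENNReal.ofReal r ≤ edist x (σ N) := by
        rw [edist_dist]
        apply ENNReal.ofReal_le_ofReal
        rw [dist_comm]
        simpa using hN
      have hne : σ N ≠ x := by
        rintro h
        exact hN (h ▸ Metric.mem_ball_self hr)
      have hpart : c' * edist x (σ N) ≤
          ∑ n ∈ Finset.range N, ENNReal.ofReal (ℓ (σ n)) * edist (σ n) (σ (n + 1)) := by
        calc c' * edist x (σ N)
            ≤ c' * ∑ n ∈ Finset.range N, edist (σ n) (σ (n + 1)) := by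
              gcongr
              rw [← h0]
              exact edist_le_range_sum_edist σ N
          _ = ∑ n ∈ Finset.range N, c' * edist (σ n) (σ (n + 1)) := Finset.mul_sum _ _ _
          _ ≤ _ := by
              refine Finset.sum_le_sum fun n hn => ?_
              exact mul_le_mul_left (hball (hmin n (Finset.mem_range.1 hn))).le _
      have hsplit : c' * edist x (σ N) + u₀ (σ N) ≤ u₀ x + (c' - c1) * edist x (σ N) := by
        calc _ ≤ ∑' n, ENNReal.ofReal (ℓ (σ n)) * edist (σ n) (σ (n + 1)) := by
              rw [← ENNReal.summable.sum_add_tsum_nat_add' (k := N)]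
              exact add_le_add hpart (hB σ hσt N)
          _ ≤ _ := hsum.le.trans (by gcongr)
      have hfinal : c1 * edist x (σ N) + u₀ (σ N) ≤ u₀ x := by
        have hsp : c' * edist x (σ N) = c1 * edist x (σ N) + (c' - c1) * edist x (σ N) := by
          rw [← add_mul, add_tsub_cancel_of_le hcc.le]
        rw [hsp, add_right_comm] at hsplit
        refine (ENNReal.add_le_add_iff_right ?_).1 hsplit
        exact ENNReal.mul_ne_top (ENNReal.sub_ne_top hc'.ne_top) (edist_ne_top _ _)
      refine le_trans ?_ (le_iSup₂ (f := fun y (_ : y ≠ x) => (u₀ x - u₀ y) / edist x y)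
        (σ N) hne)
      rw [ENNReal.le_div_iff_mul_le (Or.inl (edist_pos.2 hne.symm).ne')
        (Or.inl (edist_ne_top _ _))]
      exact ENNReal.le_sub_of_add_le_right (hfin _) hfinal
end

section
/- Let X be a complete metric space and f, g : X → ℝ ∪ {+∞} proper lsc functions with g bounded from below. If G[f](x) ≤ G[g](x) for every x ∈ X, then f is bounded from below and f − inf_X f ≤ g − inf_X g on X. Consequently, if G[f] = G[g] everywhere, then f = g + c for some constant c ∈ ℝ. -/
open Filter Topology ENNReal

/-- The global slope of a function `u : X → ℝ ∪ {+∞}` (encoded as `X → EReal`):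
`G[u](x) = sup_{y ≠ x} (u x - u y)⁺ / d(x,y)` when `u x < +∞`, and `+∞` when `u x = +∞`.
(It is meant to be used for functions that never take the value `⊥`.) -/
noncomputable def gslopeE {X : Type*} [MetricSpace X] (u : X → EReal) (x : X) : ℝ≥0∞ :=
  if u x = ⊤ then ⊤
  else ⨆ (y : X) (_ : y ≠ x), ENNReal.ofReal ((u x - u y).toReal / dist x y)

section Helpers

variable {X : Type*} [MetricSpace X]

/-- Ekeland-type principle for a real function on a domain with closed sublevel sets. -/
theorem ekeland_aux [CompleteSpace X] {A : Set X} {φ : X → ℝ}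
    (hcl : ∀ c : ℝ, IsClosed {x | x ∈ A ∧ φ x ≤ c}) (m : ℝ) (hm : ∀ x ∈ A, m ≤ φ x)
    (l : ℝ) (hl : 0 < l) (x₀ : X) (hx₀ : x₀ ∈ A) :
    ∃ z ∈ A, φ z + l * dist x₀ z ≤ φ x₀ ∧ ∀ y ∈ A, φ z - φ y ≤ l * dist z y := by
  have step : ∀ x, ∃ y, x ∈ A → (y ∈ A ∧ φ y + l * dist x y ≤ φ x ∧
      ∀ w ∈ A, φ w + l * dist x w ≤ φ x → φ y ≤ (φ x + φ w) / 2) := by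
    intro x
    by_cases hx : x ∈ A
    swap
    · exact ⟨x, fun h => absurd h hx⟩
    by_cases hmin : ∀ w ∈ A, φ w + l * dist x w ≤ φ x → φ x ≤ φ w
    · refine ⟨x, fun _ => ⟨hx, by simp, fun w hw h => ?_⟩⟩
      linarith [hmin w hw h]
    push Not at hmin
    obtain ⟨w₀, hw₀, h₀, hlt⟩ := hmin
    set T : Set ℝ := φ '' {w | w ∈ A ∧ φ w + l * dist x w ≤ φ x} with hT
    have hTbdd : BddBelow T := ⟨m, by rintro _ ⟨w, hw, rfl⟩; exact hm w hw.1⟩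
    have hTne : T.Nonempty := ⟨φ w₀, w₀, ⟨hw₀, h₀⟩, rfl⟩
    have hi : sInf T ≤ φ w₀ := csInf_le hTbdd ⟨w₀, ⟨hw₀, h₀⟩, rfl⟩
    have : sInf T < (φ x + sInf T) / 2 := by linarith
    obtain ⟨_, ⟨y, hy, rfl⟩, hylt⟩ := exists_lt_of_csInf_lt hTne this
    refine ⟨y, fun _ => ⟨hy.1, hy.2, fun w hw h => ?_⟩⟩
    have : sInf T ≤ φ w := csInf_le hTbdd ⟨w, ⟨hw, h⟩, rfl⟩
    linarith
  choose F hF using step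
  let u : ℕ → X := fun n => F^[n] x₀
  have hu : ∀ n, u (n + 1) = F (u n) := fun n => Function.iterate_succ_apply' F n x₀
  have huA : ∀ n, u n ∈ A := by
    intro n
    induction n with
    | zero => exact hx₀
    | succ k ih => rw [hu]; exact (hF _ ih).1
  have hdist : ∀ n k, φ (u (n + k)) + l * dist (u n) (u (n + k)) ≤ φ (u n) := by
    intro n k
    induction k with
    | zero => simp
    | succ k ih =>
      have h1 := (hF _ (huA (n + k))).2.1
      rw [← hu] at h1
      have h2 := mul_le_mul_of_nonneg_left
        (dist_triangle (u n) (u (n + k)) (u (n + k + 1))) hl.le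
      rw [← add_assoc]
      linarith
  have hanti : Antitone (fun n => φ (u n)) := by
    refine antitone_nat_of_succ_le fun n => ?_
    have h1 := hdist n 1
    have := mul_nonneg hl.le (dist_nonneg (x := u n) (y := u (n + 1)))
    linarith
  have hbdd : BddBelow (Set.range fun n => φ (u n)) :=
    ⟨m, by rintro _ ⟨n, rfl⟩; exact hm _ (huA n)⟩
  have hL := tendsto_atTop_ciInf hanti hbdd
  set L := ⨅ n, φ (u n) with hLdef
  have hLle : ∀ n, L ≤ φ (u n) := fun n => ciInf_le hbdd n
  have hcau : CauchySeq u := by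
    refine cauchySeq_of_le_tendsto_0' (fun n => (φ (u n) - L) / l) ?_ ?_
    · intro n k hnk
      obtain ⟨j, rfl⟩ := Nat.exists_eq_add_of_le hnk
      rw [le_div_iff₀ hl]
      linarith [hdist n j, hLle (n + j)]
    · have := (hL.sub_const L).div_const l
      simpa using this
  obtain ⟨z, hz⟩ := cauchySeq_tendsto_of_complete hcau
  have hzn : ∀ n, z ∈ A ∧ φ z ≤ φ (u n) := by
    intro n
    refine (hcl (φ (u n))).mem_of_tendsto hz ?_
    filter_upwards [eventually_ge_atTop n] with k hk
    exact ⟨huA k, hanti hk⟩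
  have hzA := (hzn 0).1
  have hzL : φ z ≤ L := le_ciInf fun n => (hzn n).2
  have hzS : ∀ n, φ z + l * dist (u n) z ≤ φ (u n) := by
    intro n
    have ht : Tendsto (fun k => L + l * dist (u n) (u k)) atTop (𝓝 (L + l * dist (u n) z)) :=
      ((tendsto_const_nhds.dist hz).const_mul l).const_add L
    have : L + l * dist (u n) z ≤ φ (u n) := by
      refine le_of_tendsto ht ?_
      filter_upwards [eventually_ge_atTop n] with k hk
      obtain ⟨j, rfl⟩ := Nat.exists_eq_add_of_le hk
      linarith [hdist n j, hLle (n + j)]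
    linarith
  refine ⟨z, hzA, hzS 0, fun y hy => ?_⟩
  by_contra hcon
  push Not at hcon
  have hyL : L ≤ φ y := by
    have h1 : ∀ n, φ (u (n + 1)) ≤ (φ (u n) + φ y) / 2 := by
      intro n
      rw [hu]
      refine (hF _ (huA n)).2.2 y hy ?_
      have h2 := mul_le_mul_of_nonneg_left (dist_triangle (u n) z y) hl.le
      linarith [hzS n]
    have h2 := le_of_tendsto_of_tendsto' (hL.comp (tendsto_add_atTop_nat 1))
      ((hL.add_const (φ y)).div_const 2) h1
    linarith
  have := mul_nonneg hl.le (dist_nonneg (x := z) (y := y))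
  linarith

/-- The determination estimate at points of finite slope. -/
theorem determination_aux1 [CompleteSpace X] {A B : Set X} {φ ψ : X → ℝ}
    (hcl : ∀ c : ℝ, IsClosed {x | x ∈ A ∧ φ x ≤ c}) (m : ℝ) (hm : ∀ x ∈ A, m ≤ φ x)
    (H : ∀ x ∈ A, ∀ s : ℝ, 0 < s → (∀ y ∈ A, φ x - φ y ≤ s * dist x y) →
      x ∈ B ∧ ∀ y ∈ B, ψ x - ψ y ≤ s * dist x y)
    (x₀ : X) (hx₀ : x₀ ∈ A) (s : ℝ) (hs : 0 < s)
    (hxs : ∀ y ∈ A, φ x₀ - φ y ≤ s * dist x₀ y) (y : X) (hy : y ∈ B) :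
    ψ x₀ - ψ y ≤ φ x₀ - m := by
  -- estimate with a parameter q < 1
  have key : ∀ q : ℝ, 0 < q → q < 1 → q * (ψ x₀ - ψ y) ≤ φ x₀ - m := by
    intro q hq0 hq1
    have step : ∀ (n : ℕ) (x : X), ∃ z, x ∈ A → (z ∈ A ∧
        φ z + s * q ^ (n + 1) * dist x z ≤ φ x ∧
        ∀ y ∈ A, φ z - φ y ≤ s * q ^ (n + 1) * dist z y) := by
      intro n x
      by_cases hx : x ∈ A
      · obtain ⟨z, h1, h2, h3⟩ := ekeland_aux hcl m hm (s * q ^ (n + 1)) (by positivity) x hx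
        exact ⟨z, fun _ => ⟨h1, h2, h3⟩⟩
      · exact ⟨x, fun h => absurd h hx⟩
    choose F hF using step
    let u : ℕ → X := fun n => Nat.rec x₀ (fun k x => F k x) n
    have hu0 : u 0 = x₀ := rfl
    have hu : ∀ n, u (n + 1) = F n (u n) := fun n => rfl
    have huA : ∀ n, u n ∈ A := by
      intro n
      induction n with
      | zero => exact hx₀
      | succ k ih => rw [hu]; exact (hF _ _ ih).1
    have hslope : ∀ n, ∀ y ∈ A, φ (u n) - φ y ≤ s * q ^ n * dist (u n) y := by
      intro n
      cases n with
      | zero => simpa [hu0] using hxs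
      | succ k => rw [hu]; exact (hF _ _ (huA k)).2.2
    have hdec : ∀ n, φ (u (n + 1)) + s * q ^ (n + 1) * dist (u n) (u (n + 1)) ≤ φ (u n) := by
      intro n
      rw [hu]; exact (hF _ _ (huA n)).2.1
    have hB : ∀ n, u n ∈ B ∧ ∀ y ∈ B, ψ (u n) - ψ y ≤ s * q ^ n * dist (u n) y := fun n =>
      H _ (huA n) _ (by positivity) (hslope n)
    have hanti : Antitone (fun n => φ (u n)) := by
      refine antitone_nat_of_succ_le fun n => ?_
      have h1 := hdec n
      have : 0 ≤ s * q ^ (n + 1) * dist (u n) (u (n + 1)) := by positivity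
      linarith
    have hbdd : BddBelow (Set.range fun n => φ (u n)) :=
      ⟨m, by rintro _ ⟨n, rfl⟩; exact hm _ (huA n)⟩
    have hL := tendsto_atTop_ciInf hanti hbdd
    set L := ⨅ n, φ (u n) with hLdef
    have hmL : m ≤ L := le_ciInf fun n => hm _ (huA n)
    have htel : ∀ n, q * (ψ x₀ - ψ (u n)) ≤ φ x₀ - φ (u n) := by
      intro n
      induction n with
      | zero => simp [hu0]
      | succ k ih =>
        have h1 := mul_le_mul_of_nonneg_left ((hB k).2 _ (hB (k + 1)).1) hq0.le
        have h2 := hdec k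
        have h3 : q * (s * q ^ k * dist (u k) (u (k + 1)))
          = s * q ^ (k + 1) * dist (u k) (u (k + 1)) := by ring
        linarith
    have hd : ∀ N k, s * q ^ (N + k) * dist (u N) (u (N + k)) ≤ φ (u N) - φ (u (N + k)) := by
      intro N k
      induction k with
      | zero => simp
      | succ k ih =>
        have h1 := hdec (N + k)
        have h2 : s * q ^ (N + k + 1) * dist (u N) (u (N + k + 1)) ≤
            s * q ^ (N + k + 1) * (dist (u N) (u (N + k)) + dist (u (N + k)) (u (N + k + 1))) :=
          mul_le_mul_of_nonneg_left (dist_triangle _ _ _) (by positivity)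
        have h3 : s * q ^ (N + k + 1) * dist (u N) (u (N + k)) ≤
            s * q ^ (N + k) * dist (u N) (u (N + k)) := by
          refine mul_le_mul_of_nonneg_right ?_ dist_nonneg
          refine mul_le_mul_of_nonneg_left ?_ hs.le
          exact pow_le_pow_of_le_one hq0.le hq1.le (Nat.le_succ _)
        rw [← add_assoc]
        linarith
    have hest : ∀ N n, N ≤ n → q * (ψ x₀ - ψ y) ≤ (φ x₀ - φ (u n)) +
        q * (φ (u N) - φ (u n) + s * q ^ n * dist (u N) y) := by
      intro N n hn
      obtain ⟨k, rfl⟩ := Nat.exists_eq_add_of_le hn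
      have h1 := htel (N + k)
      have h2 := (hB (N + k)).2 y hy
      have h3 := hd N k
      have h4 : s * q ^ (N + k) * dist (u (N + k)) y ≤
          s * q ^ (N + k) * (dist (u N) (u (N + k)) + dist (u N) y) := by
        refine mul_le_mul_of_nonneg_left ?_ (by positivity)
        have := dist_triangle (u (N + k)) (u N) y
        rwa [dist_comm (u (N + k)) (u N)] at this
      have h5 : ψ (u (N + k)) - ψ y ≤
        φ (u N) - φ (u (N + k)) + s * q ^ (N + k) * dist (u N) y := by linarith
      have h6 := mul_le_mul_of_nonneg_left h5 hq0.le
      linarith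
    have hpow : Tendsto (fun n : ℕ => q ^ n) atTop (𝓝 0) :=
      tendsto_pow_atTop_nhds_zero_of_lt_one hq0.le hq1
    have hest2 : ∀ N, q * (ψ x₀ - ψ y) ≤ (φ x₀ - L) + q * (φ (u N) - L) := by
      intro N
      have ht : Tendsto (fun n => (φ x₀ - φ (u n)) +
          q * (φ (u N) - φ (u n) + s * q ^ n * dist (u N) y)) atTop
          (𝓝 ((φ x₀ - L) + q * (φ (u N) - L + s * 0 * dist (u N) y))) :=
        (hL.const_sub _).add (((hL.const_sub _).add ((hpow.const_mul s).mul_const _)).const_mul q)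
      have := ge_of_tendsto ht (by
        filter_upwards [eventually_ge_atTop N] with n hn using hest N n hn)
      simpa using this
    have ht2 : Tendsto (fun N => (φ x₀ - L) + q * (φ (u N) - L)) atTop
        (𝓝 ((φ x₀ - L) + q * (L - L))) :=
      ((hL.sub_const L).const_mul q).const_add _
    have := ge_of_tendsto' ht2 hest2
    simp only [sub_self, mul_zero, add_zero] at this
    linarith
  have ht : Tendsto (fun q : ℝ => q * (ψ x₀ - ψ y)) (𝓝[<] 1) (𝓝 (1 * (ψ x₀ - ψ y))) :=
    (tendsto_id.mul_const _).mono_left nhdsWithin_le_nhds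
  rw [one_mul] at ht
  refine le_of_tendsto ht ?_
  filter_upwards [Ioo_mem_nhdsLT (show (0 : ℝ) < 1 by norm_num)] with q hq
  exact key q hq.1 hq.2

/-- The determination estimate on the whole domain. -/
theorem determination_aux2 [CompleteSpace X] {A B : Set X} {φ ψ : X → ℝ}
    (hcl : ∀ c : ℝ, IsClosed {x | x ∈ A ∧ φ x ≤ c})
    (hcl2 : ∀ c : ℝ, IsClosed {x | x ∈ B ∧ ψ x ≤ c}) (m : ℝ) (hm : ∀ x ∈ A, m ≤ φ x)
    (H : ∀ x ∈ A, ∀ s : ℝ, 0 < s → (∀ y ∈ A, φ x - φ y ≤ s * dist x y) →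
      x ∈ B ∧ ∀ y ∈ B, ψ x - ψ y ≤ s * dist x y)
    (x : X) (hx : x ∈ A) (y : X) (hy : y ∈ B) :
    x ∈ B ∧ ψ x ≤ ψ y + (φ x - m) := by
  have hz : ∀ n : ℕ, ∃ z ∈ A, φ z + ((n : ℝ) + 1) * dist x z ≤ φ x ∧
      ∀ y ∈ A, φ z - φ y ≤ ((n : ℝ) + 1) * dist z y := fun n =>
    ekeland_aux hcl m hm ((n : ℝ) + 1) (by positivity) x hx
  choose z hzA hz1 hz2 using hz
  have hlim : Tendsto z atTop (𝓝 x) := by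
    rw [tendsto_iff_dist_tendsto_zero]
    have h0 : Tendsto (fun n : ℕ => (φ x - m) * (1 / ((n : ℝ) + 1))) atTop (𝓝 ((φ x - m) * 0)) :=
      tendsto_one_div_add_atTop_nhds_zero_nat.const_mul _
    rw [mul_zero] at h0
    refine squeeze_zero (fun _ => dist_nonneg) (fun n => ?_) h0
    rw [mul_one_div, le_div_iff₀ (by positivity), dist_comm]
    linarith [hz1 n, hm _ (hzA n)]
  refine (hcl2 (ψ y + (φ x - m))).mem_of_tendsto hlim (Eventually.of_forall fun n => ?_)
  have hpos : (0 : ℝ) < (n : ℝ) + 1 := by positivity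
  refine ⟨(H _ (hzA n) _ hpos (hz2 n)).1, ?_⟩
  have h1 := determination_aux1 hcl m hm H (z n) (hzA n) _ hpos (hz2 n) y hy
  have h2 := hz1 n
  have : 0 ≤ ((n : ℝ) + 1) * dist x (z n) := by positivity
  linarith

theorem gslopeE_le_iff (u : X → EReal) (hbot : ∀ x, u x ≠ ⊥) (x : X) (s : ℝ) (hs : 0 < s) :
    gslopeE u x ≤ ENNReal.ofReal s ↔
      u x ≠ ⊤ ∧ ∀ y ∈ {y | u y ≠ ⊤}, (u x).toReal - (u y).toReal ≤ s * dist x y := by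
  unfold gslopeE
  by_cases hx : u x = ⊤
  · simp [hx]
  rw [if_neg hx]
  simp only [iSup_le_iff, ne_eq, hx, not_false_eq_true, true_and, Set.mem_ofPred_eq]
  have hval : ∀ y, u y ≠ ⊤ → (u x - u y).toReal = (u x).toReal - (u y).toReal := fun y hy =>
    EReal.toReal_sub hx (hbot x) hy (hbot y)
  constructor
  · intro h y hy
    by_cases hxy : y = x
    · subst hxy; simp
    have h1 := (ENNReal.ofReal_le_ofReal_iff hs.le).1 (h y hxy)
    have hd : 0 < dist x y := dist_pos.2 (Ne.symm hxy)
    rw [div_le_iff₀ hd, hval y hy] at h1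
    exact h1
  · intro h y hxy
    have hd : 0 < dist x y := dist_pos.2 (Ne.symm hxy)
    refine ENNReal.ofReal_le_ofReal ?_
    rw [div_le_iff₀ hd]
    by_cases hy : u y = ⊤
    · have : (u x - u y).toReal = 0 := by
        rw [hy]; simp
      rw [this]; positivity
    · rw [hval y hy]; exact h y hy

theorem closed_sublevel_aux (u : X → EReal) (hu : LowerSemicontinuous u) (hbot : ∀ x, u x ≠ ⊥)
    (c : ℝ) : IsClosed {x | x ∈ {x | u x ≠ ⊤} ∧ (u x).toReal ≤ c} := by
  have h := hu.isClosed_preimage (c : EReal)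
  convert h using 1
  ext x
  simp only [Set.mem_ofPred_eq, Set.mem_preimage, Set.mem_Iic]
  constructor
  · rintro ⟨h1, h2⟩
    rw [← EReal.coe_toReal h1 (hbot x)]
    exact_mod_cast h2
  · intro h
    have h1 : u x ≠ ⊤ := fun h' => by rw [h'] at h; exact absurd h (by simp)
    refine ⟨h1, ?_⟩
    rw [← EReal.coe_toReal h1 (hbot x)] at h
    exact_mod_cast h

theorem exists_iInf_aux (u : X → EReal) (hp : ∃ x, u x ≠ ⊤)
    (hb : ∃ m : ℝ, ∀ x, (m : EReal) ≤ u x) : ∃ a : ℝ, (⨅ y, u y) = (a : EReal) := by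
  obtain ⟨m, hm⟩ := hb
  obtain ⟨x, hx⟩ := hp
  have h1 : (⨅ y, u y) ≠ ⊤ := fun h => hx (top_le_iff.1 (h ▸ iInf_le u x))
  have h2 : (⨅ y, u y) ≠ ⊥ := fun h => by
    have : (m : EReal) ≤ ⨅ y, u y := le_iInf hm
    rw [h] at this
    simp at this
  exact ⟨_, (EReal.coe_toReal h1 h2).symm⟩

/-- The first two conclusions. -/
theorem determination_aux3 [CompleteSpace X]
    (f g : X → EReal)
    (hf : LowerSemicontinuous f) (hg : LowerSemicontinuous g)
    (hfbot : ∀ x, f x ≠ ⊥) (hgbot : ∀ x, g x ≠ ⊥)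
    (hfproper : ∃ x, f x ≠ ⊤) (hgproper : ∃ x, g x ≠ ⊤)
    (hgbdd : ∃ m : ℝ, ∀ x, (m : EReal) ≤ g x)
    (hle : ∀ x, gslopeE f x ≤ gslopeE g x) :
    (∃ m : ℝ, ∀ x, (m : EReal) ≤ f x) ∧
    (∀ x, f x - (⨅ y, f y) ≤ g x - (⨅ y, g y)) := by
  obtain ⟨b, hb⟩ := exists_iInf_aux g hgproper hgbdd
  have hbm : ∀ x ∈ {x | g x ≠ ⊤}, b ≤ (g x).toReal := by
    intro x hx
    have h : (b : EReal) ≤ g x := hb ▸ iInf_le g x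
    rw [← EReal.coe_toReal hx (hgbot x)] at h
    exact_mod_cast h
  have main := determination_aux2 (A := {x | g x ≠ ⊤}) (B := {x | f x ≠ ⊤})
    (closed_sublevel_aux g hg hgbot) (closed_sublevel_aux f hf hfbot) b hbm (by
      intro x hx s hs h
      exact (gslopeE_le_iff f hfbot x s hs).1
        ((hle x).trans ((gslopeE_le_iff g hgbot x s hs).2 ⟨hx, h⟩)))
  have hfb : ∃ m : ℝ, ∀ x, (m : EReal) ≤ f x := by
    obtain ⟨x, hx⟩ := hgproper
    refine ⟨(f x).toReal - ((g x).toReal - b), fun y => ?_⟩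
    by_cases hy : f y = ⊤
    · simp [hy]
    · rw [← EReal.coe_toReal hy (hfbot y)]
      have := (main x hx y hy).2
      exact_mod_cast (by linarith : (f x).toReal - ((g x).toReal - b) ≤ (f y).toReal)
  refine ⟨hfb, fun x => ?_⟩
  obtain ⟨a, ha⟩ := exists_iInf_aux f hfproper hfb
  rw [ha, hb]
  by_cases hx : g x = ⊤
  · simp [hx]
  obtain ⟨y₀, hy₀⟩ := hfproper
  have hxf : f x ≠ ⊤ := (main x hx y₀ hy₀).1
  have h1 : (((f x).toReal - ((g x).toReal - b) : ℝ) : EReal) ≤ ⨅ y, f y := by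
    refine le_iInf fun y => ?_
    by_cases hy : f y = ⊤
    · simp [hy]
    · rw [← EReal.coe_toReal hy (hfbot y)]
      have := (main x hx y hy).2
      exact_mod_cast (by linarith : (f x).toReal - ((g x).toReal - b) ≤ (f y).toReal)
  rw [ha] at h1
  have h2 : (f x).toReal - ((g x).toReal - b) ≤ a := by exact_mod_cast h1
  rw [← EReal.coe_toReal hxf (hfbot x), ← EReal.coe_toReal hx (hgbot x)]
  exact_mod_cast (by linarith : (f x).toReal - a ≤ (g x).toReal - b)

end Helpers

/-- Determination result: on a complete metric space, if `f, g : X → ℝ ∪ {+∞}` are proper lsc,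
`g` is bounded from below and `G[f] ≤ G[g]` everywhere, then `f` is bounded from below and
`f - inf f ≤ g - inf g`; consequently, if `G[f] = G[g]` everywhere then `f = g + c` for a
real constant `c`. -/
theorem gslope_le_determination {X : Type*} [MetricSpace X] [CompleteSpace X]
    (f g : X → EReal)
    (hf : LowerSemicontinuous f) (hg : LowerSemicontinuous g)
    (hfbot : ∀ x, f x ≠ ⊥) (hgbot : ∀ x, g x ≠ ⊥)
    (hfproper : ∃ x, f x ≠ ⊤) (hgproper : ∃ x, g x ≠ ⊤)
    (hgbdd : ∃ m : ℝ, ∀ x, (m : EReal) ≤ g x)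
    (hle : ∀ x, gslopeE f x ≤ gslopeE g x) :
    (∃ m : ℝ, ∀ x, (m : EReal) ≤ f x) ∧
    (∀ x, f x - (⨅ y, f y) ≤ g x - (⨅ y, g y)) ∧
    ((∀ x, gslopeE f x = gslopeE g x) → ∃ c : ℝ, ∀ x, f x = g x + (c : EReal)) := by
  obtain ⟨h1, h2⟩ := determination_aux3 f g hf hg hfbot hgbot hfproper hgproper hgbdd hle
  refine ⟨h1, h2, fun heq => ?_⟩
  obtain ⟨-, h3⟩ := determination_aux3 g f hg hf hgbot hfbot hgproper hfproper h1
    (fun x => (heq x).ge)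
  obtain ⟨a, ha⟩ := exists_iInf_aux f hfproper h1
  obtain ⟨b, hb⟩ := exists_iInf_aux g hgproper hgbdd
  refine ⟨a - b, fun x => ?_⟩
  have h := le_antisymm (h2 x) (h3 x)
  rw [ha, hb] at h
  by_cases hx : g x = ⊤
  · by_cases hxf : f x = ⊤
    · rw [hx, hxf, EReal.top_add_coe]
    · rw [hx, EReal.top_sub_coe, ← EReal.coe_toReal hxf (hfbot x), ← EReal.coe_sub] at h
      exact absurd h (EReal.coe_ne_top _)
  · by_cases hxf : f x = ⊤
    · rw [hxf, EReal.top_sub_coe, ← EReal.coe_toReal hx (hgbot x), ← EReal.coe_sub] at h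
      exact absurd h.symm (EReal.coe_ne_top _)
    · rw [← EReal.coe_toReal hxf (hfbot x), ← EReal.coe_toReal hx (hgbot x)] at h ⊢
      have h' : (f x).toReal - a = (g x).toReal - b := by exact_mod_cast h
      exact_mod_cast (by linarith : (f x).toReal = (g x).toReal + (a - b))
end
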